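/- Fractional Sobolev inequality on ℝ^n: let n ≥ 1, 0 < s < 1 with n > 2s, and let 2*(s) = 2n/(n−2s). There exists S = S(n,s) > 0 such that for all u ∈ C_c^∞(ℝ^n), (∫_{ℝ^n} |u|^{2*(s)})^{1/2*(s)} ≤ S (∫_{ℝ^n}∫_{ℝ^n} |u(x) − u(y)|^2 / |x−y|^{n+2s} dx dy)^{1/2}. -/

import Mathlib

open Real Set MeasureTheory

/-- The radial kernel dominating the Gagliardo integrand is integrable. -/
lemma kernel_integrable (n : ℕ) (hn : 1 ≤ n) (s : ℝ) (hs : 0 < s) (hs1 : s < 1)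
    (A B : ℝ) (hA : 0 ≤ A) (hB : 0 ≤ B) :
    Integrable (fun z : EuclideanSpace ℝ (Fin n) =>
      min (A * ‖z‖ ^ 2) B / ‖z‖ ^ ((n : ℝ) + 2 * s)) := by
  have : Nonempty (Fin n) := ⟨⟨0, hn⟩⟩
  have : Nontrivial (EuclideanSpace ℝ (Fin n)) := by infer_instance
  refine (integrable_fun_norm_addHaar (E := EuclideanSpace ℝ (Fin n)) volume
    (f := fun t : ℝ => min (A * t ^ 2) B / t ^ ((n : ℝ) + 2 * s))).2 ?_
  simp only [finrank_euclideanSpace, Fintype.card_fin, smul_eq_mul]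
  have key : ∀ t : ℝ, 0 < t → t ^ (n - 1) * (min (A * t ^ 2) B / t ^ ((n : ℝ) + 2 * s))
      = min (A * t ^ 2) B * t ^ (-1 - 2 * s) := by
    intro t ht
    have h1 : t ^ (n - 1) = t ^ ((n : ℝ) - 1) := by
      rw [← Real.rpow_natCast, Nat.cast_sub hn, Nat.cast_one]
    have h2 : t ^ (-1 - 2 * s) = t ^ ((n : ℝ) - 1) / t ^ ((n : ℝ) + 2 * s) := by
      rw [← Real.rpow_sub ht]; congr 1; ring
    rw [h1, h2]; ring
  have hmeas : ∀ S : Set ℝ, AEStronglyMeasurable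
      (fun t : ℝ => t ^ (n - 1) * (min (A * t ^ 2) B / t ^ ((n : ℝ) + 2 * s)))
      (volume.restrict S) := by
    intro S
    apply Measurable.aestronglyMeasurable
    fun_prop
  rw [← Ioc_union_Ioi_eq_Ioi (zero_le_one' ℝ)]
  apply IntegrableOn.union
  · have h := (intervalIntegral.intervalIntegrable_rpow' (a := 0) (b := 1)
      (r := 1 - 2 * s) (by linarith)).1
    refine Integrable.mono' (Integrable.const_mul h A) (hmeas _) ?_
    filter_upwards [self_mem_ae_restrict measurableSet_Ioc] with t ht
    rw [key t ht.1, Real.norm_of_nonneg]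
    · have h2 : t ^ (1 - 2 * s) = t ^ 2 * t ^ (-1 - 2 * s) := by
        rw [← Real.rpow_natCast, ← Real.rpow_add ht.1]; congr 1; push_cast; ring
      rw [h2, ← mul_assoc]
      exact mul_le_mul_of_nonneg_right (min_le_left _ _) (Real.rpow_nonneg ht.1.le _)
    · exact mul_nonneg (le_min (by positivity) hB) (Real.rpow_nonneg ht.1.le _)
  · have h := integrableOn_Ioi_rpow_of_lt (a := -1 - 2 * s) (c := 1) (by linarith) one_pos
    refine Integrable.mono' (Integrable.const_mul h B) (hmeas _) ?_
    filter_upwards [self_mem_ae_restrict measurableSet_Ioi] with t ht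
    have ht0 : 0 < t := lt_trans one_pos ht
    rw [key t ht0, Real.norm_of_nonneg]
    · exact mul_le_mul_of_nonneg_right (min_le_right _ _) (Real.rpow_nonneg ht0.le _)
    · exact mul_nonneg (le_min (by positivity) hB) (Real.rpow_nonneg ht0.le _)

/-- The Gagliardo integrand of a test function is integrable, also slice-wise. -/
lemma gagliardo_integrable (n : ℕ) (hn : 1 ≤ n) (s : ℝ) (hs : 0 < s) (hs1 : s < 1)
    (u : EuclideanSpace ℝ (Fin n) → ℝ) (hu : ContDiff ℝ (⊤ : ℕ∞) u)
    (hc : HasCompactSupport u) :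
    (∀ x, Integrable (fun y : EuclideanSpace ℝ (Fin n) =>
      |u x - u y| ^ 2 / ‖x - y‖ ^ ((n : ℝ) + 2 * s))) ∧
    Integrable (fun x : EuclideanSpace ℝ (Fin n) => ∫ y : EuclideanSpace ℝ (Fin n),
      |u x - u y| ^ 2 / ‖x - y‖ ^ ((n : ℝ) + 2 * s)) := by
  obtain ⟨L, hL⟩ := ContDiff.lipschitzWith_of_hasCompactSupport hc hu (by simp)
  obtain ⟨M, hM⟩ := hc.exists_bound_of_continuous hu.continuous
  have hum : Measurable u := hu.continuous.measurable
  set k : EuclideanSpace ℝ (Fin n) → ℝ := fun z =>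
      min ((L : ℝ) ^ 2 * ‖z‖ ^ 2) ((2 * M) ^ 2) / ‖z‖ ^ ((n : ℝ) + 2 * s) with hk
  have hkint : Integrable k := kernel_integrable n hn s hs hs1 _ _ (by positivity) (by positivity)
  have hk0 : ∀ z, 0 ≤ k z := fun z => by
    simp only [hk]
    positivity
  have hbd : ∀ x y, |u x - u y| ^ 2 / ‖x - y‖ ^ ((n : ℝ) + 2 * s) ≤ k (x - y) := by
    intro x y
    simp only [hk]
    gcongr
    apply le_min
    · rw [← mul_pow]
      gcongr
      have := hL.dist_le_mul x y
      rwa [Real.dist_eq, dist_eq_norm] at this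
    · gcongr
      have h1 := hM x
      have h2 := hM y
      rw [Real.norm_eq_abs] at h1 h2
      have := abs_sub (u x) (u y)
      linarith
  have hF0 : ∀ x y, 0 ≤ |u x - u y| ^ 2 / ‖x - y‖ ^ ((n : ℝ) + 2 * s) := fun x y => by positivity
  refine ⟨fun x => ?_, ?_⟩
  · refine Integrable.mono' (hkint.comp_sub_left x) ?_ (Filter.Eventually.of_forall fun y => ?_)
    · apply Measurable.aestronglyMeasurable
      fun_prop
    · rw [Real.norm_of_nonneg (hF0 x y)]; exact hbd x y
  · set χ : EuclideanSpace ℝ (Fin n) → ℝ := (tsupport u).indicator (fun _ => (1 : ℝ)) with hχ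
    have hχint : Integrable χ := by
      rw [hχ, integrable_indicator_iff (isClosed_tsupport u).measurableSet]
      exact integrableOn_const hc.isCompact.measure_lt_top.ne
    have hχ0 : ∀ x, 0 ≤ χ x := fun x => indicator_nonneg (fun _ _ => zero_le_one) x
    have h1 : Integrable (fun q : EuclideanSpace ℝ (Fin n) × EuclideanSpace ℝ (Fin n) =>
        χ q.2 * k (q.1 - q.2)) (volume.prod volume) :=
      Integrable.convolution_integrand (ContinuousLinearMap.mul ℝ ℝ) hχint hkint
    have h2 : Integrable (fun q : EuclideanSpace ℝ (Fin n) × EuclideanSpace ℝ (Fin n) =>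
        χ q.1 * k (q.2 - q.1)) (volume.prod volume) := h1.swap
    have h3 : Integrable (fun q : EuclideanSpace ℝ (Fin n) × EuclideanSpace ℝ (Fin n) =>
        |u q.1 - u q.2| ^ 2 / ‖q.1 - q.2‖ ^ ((n : ℝ) + 2 * s)) (volume.prod volume) := by
      refine Integrable.mono' (h1.add h2) ?_ (Filter.Eventually.of_forall fun q => ?_)
      · apply Measurable.aestronglyMeasurable
        fun_prop
      · rw [Real.norm_of_nonneg (hF0 _ _)]
        have hsym : k (q.2 - q.1) = k (q.1 - q.2) := by
          simp only [hk, norm_sub_rev q.2 q.1]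
        simp only [Pi.add_apply]
        rw [hsym, ← add_mul]
        by_cases hx : q.1 ∈ tsupport u
        · have : χ q.1 = 1 := by simp [hχ, hx]
          have h0 := hχ0 q.2
          have := hk0 (q.1 - q.2)
          nlinarith [hbd q.1 q.2]
        · by_cases hy : q.2 ∈ tsupport u
          · have : χ q.2 = 1 := by simp [hχ, hy]
            have h0 := hχ0 q.1
            have := hk0 (q.1 - q.2)
            nlinarith [hbd q.1 q.2]
          · rw [image_eq_zero_of_notMem_tsupport hx, image_eq_zero_of_notMem_tsupport hy]
            have := mul_nonneg (add_nonneg (hχ0 q.2) (hχ0 q.1)) (hk0 (q.1 - q.2))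
            simpa using this
    exact h3.integral_prod_left

/-- Pointwise (Hedberg type) estimate. -/
lemma pointwise_bound (n : ℕ) (hn : 1 ≤ n) (s : ℝ) (hs : 0 < s)
    (hns : 2 * s < (n : ℝ)) (p : ℝ) (hp : p = 2 * (n : ℝ) / ((n : ℝ) - 2 * s)) (ω : ℝ)
    (hω : ω = (volume : Measure (EuclideanSpace ℝ (Fin n))).real (Metric.ball 0 1))
    (hω0 : 0 < ω)
    (u : EuclideanSpace ℝ (Fin n) → ℝ) (hu : Continuous u)
    (hui : Integrable (fun x => |u x| ^ p)) (I : ℝ) (hI : I = ∫ x, |u x| ^ p) (hI0 : 0 < I)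
    (x : EuclideanSpace ℝ (Fin n))
    (hD : Integrable (fun y : EuclideanSpace ℝ (Fin n) =>
      |u x - u y| ^ 2 / ‖x - y‖ ^ ((n : ℝ) + 2 * s))) :
    |u x| ^ p ≤ 8 / ω * (2 * 2 ^ p / ω) ^ (2 * s / n) * I ^ (2 * s / n) *
      ∫ y : EuclideanSpace ℝ (Fin n), |u x - u y| ^ 2 / ‖x - y‖ ^ ((n : ℝ) + 2 * s) := by
  have hn0 : (0 : ℝ) < n := by positivity
  have hd : 0 < (n : ℝ) - 2 * s := by linarith
  have hp0 : 0 < p := by rw [hp]; positivity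
  set D := ∫ y : EuclideanSpace ℝ (Fin n), |u x - u y| ^ 2 / ‖x - y‖ ^ ((n : ℝ) + 2 * s) with hDdef
  have hF0 : ∀ y, 0 ≤ |u x - u y| ^ 2 / ‖x - y‖ ^ ((n : ℝ) + 2 * s) := fun y => by positivity
  have hD0 : 0 ≤ D := integral_nonneg hF0
  rcases eq_or_lt_of_le (abs_nonneg (u x)) with ha | ha
  · rw [← ha, Real.zero_rpow hp0.ne']
    positivity
  set a := |u x| with hadef
  set T : ℝ := 2 * 2 ^ p * I / (ω * a ^ p) with hT
  have hap : 0 < a ^ p := Real.rpow_pos_of_pos ha p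
  have hT0 : 0 < T := by positivity
  set r : ℝ := T ^ (1 / (n : ℝ)) with hr
  have hr0 : 0 < r := Real.rpow_pos_of_pos hT0 _
  have hrn : r ^ n = T := by
    rw [hr, ← Real.rpow_natCast, ← Real.rpow_mul hT0.le]
    rw [one_div_mul_cancel hn0.ne', Real.rpow_one]
  have hball : (volume : Measure (EuclideanSpace ℝ (Fin n))).real (Metric.ball x r) = T * ω := by
    rw [← hrn, hω, Measure.real, Measure.real, Measure.addHaar_ball_of_pos _ _ hr0]
    simp [ENNReal.toReal_mul, ENNReal.toReal_ofReal, hr0.le]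
  set A : Set (EuclideanSpace ℝ (Fin n)) := {y | (a / 2) ^ p ≤ |u y| ^ p} with hA
  have hAp : 0 < (a / 2) ^ p := by positivity
  have hcheb : (a / 2) ^ p * volume.real A ≤ I := by
    rw [hI]
    exact mul_meas_ge_le_integral_of_nonneg
      (Filter.Eventually.of_forall fun y => Real.rpow_nonneg (abs_nonneg _) _) hui _
  have hAfin : volume A ≠ ⊤ := (hui.measure_ge_lt_top hAp).ne
  have hAm : MeasurableSet A := by
    apply measurableSet_le measurable_const
    have := hu.measurable
    fun_prop
  have hAvol : volume.real A ≤ T * ω / 2 := by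
    have h2 : (a / 2) ^ p = a ^ p / 2 ^ p := Real.div_rpow ha.le (by norm_num) p
    have h3 : T * ω / 2 = I / (a / 2) ^ p := by
      rw [h2, hT]; field_simp
    rw [h3, le_div_iff₀ hAp, mul_comm]
    exact hcheb
  set G := Metric.ball x r \ A with hG
  have hGvol : T * ω / 2 ≤ volume.real G := by
    have := le_measureReal_sdiff (μ := volume) (s₁ := Metric.ball x r) (s₂ := A) hAfin
    rw [hball] at this
    linarith
  have hGfin : volume G ≠ ⊤ :=
    ((measure_mono sdiff_subset).trans_lt (measure_ball_lt_top (x := x) (r := r))).ne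
  have hGle : ∀ y ∈ G, (a / 2) ^ 2 / r ^ ((n : ℝ) + 2 * s) ≤
      |u x - u y| ^ 2 / ‖x - y‖ ^ ((n : ℝ) + 2 * s) := by
    rintro y ⟨hy1, hy2⟩
    have hy3 : |u y| < a / 2 := by
      by_contra hcon
      push Not at hcon
      exact hy2 (Real.rpow_le_rpow (by positivity) hcon hp0.le)
    have hxy : x ≠ y := by
      rintro rfl
      linarith
    have hpos : 0 < ‖x - y‖ := norm_pos_iff.2 (sub_ne_zero.2 hxy)
    have hle : ‖x - y‖ ≤ r := by
      rw [Metric.mem_ball, dist_comm, dist_eq_norm] at hy1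
      exact hy1.le
    have hdiff : a / 2 ≤ |u x - u y| := by
      have := abs_sub_abs_le_abs_sub (u x) (u y)
      linarith
    gcongr
  have hmain : (a / 2) ^ 2 / r ^ ((n : ℝ) + 2 * s) * (T * ω / 2) ≤ D := by
    calc _ ≤ (a / 2) ^ 2 / r ^ ((n : ℝ) + 2 * s) * volume.real G := by gcongr
      _ ≤ _ := setIntegral_ge_of_const_le_real (measurableSet_ball.diff hAm) hGfin hGle
                hD.integrableOn
      _ ≤ D := setIntegral_le_integral hD (Filter.Eventually.of_forall hF0)
  have hr1 : r ^ ((n : ℝ) + 2 * s) = T * T ^ (2 * s / n) := by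
    rw [Real.rpow_add hr0, Real.rpow_natCast, hrn, hr, ← Real.rpow_mul hT0.le]
    congr 2; ring
  have hT1 : T ^ (2 * s / n) * a ^ (p * (2 * s / n)) =
      (2 * 2 ^ p / ω) ^ (2 * s / n) * I ^ (2 * s / n) := by
    rw [Real.rpow_mul ha.le, ← Real.mul_rpow hT0.le hap.le, ← Real.mul_rpow (by positivity) hI0.le]
    congr 1
    rw [hT]; field_simp
  have hpe : p = 2 + p * (2 * s / n) := by
    rw [hp]; field_simp; ring
  have hapow : a ^ p = a ^ 2 * a ^ (p * (2 * s / n)) := by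
    conv_lhs => rw [hpe]
    rw [Real.rpow_add ha]
    norm_num
  have hTs : 0 < T ^ (2 * s / n) := by positivity
  have h4 : a ^ 2 ≤ 8 / ω * T ^ (2 * s / n) * D := by
    calc a ^ 2 = 8 / ω * T ^ (2 * s / n) *
          ((a / 2) ^ 2 / r ^ ((n : ℝ) + 2 * s) * (T * ω / 2)) := by
            rw [hr1]; field_simp; norm_num
      _ ≤ _ := by gcongr
  calc a ^ p = a ^ 2 * a ^ (p * (2 * s / n)) := hapow
    _ ≤ 8 / ω * T ^ (2 * s / n) * D * a ^ (p * (2 * s / n)) := by gcongr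
    _ = 8 / ω * (T ^ (2 * s / n) * a ^ (p * (2 * s / n))) * D := by ring
    _ = _ := by rw [hT1]; ring

theorem stmt_12 (n : ℕ) (hn : 1 ≤ n) (s : ℝ) (hs : 0 < s) (hs1 : s < 1)
    (hns : 2 * s < (n : ℝ)) (p : ℝ) (hp : p = 2 * (n : ℝ) / ((n : ℝ) - 2 * s)) :
    ∃ S : ℝ, 0 < S ∧
      ∀ u : EuclideanSpace ℝ (Fin n) → ℝ, ContDiff ℝ (⊤ : ℕ∞) u → HasCompactSupport u →
        (∫ x : EuclideanSpace ℝ (Fin n), |u x| ^ p) ^ (1 / p) ≤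
          S * (∫ x : EuclideanSpace ℝ (Fin n), ∫ y : EuclideanSpace ℝ (Fin n),
              |u x - u y| ^ 2 / ‖x - y‖ ^ ((n : ℝ) + 2 * s)) ^ ((1 : ℝ) / 2) := by
  have hn0 : (0 : ℝ) < n := by positivity
  have hd : 0 < (n : ℝ) - 2 * s := by linarith
  have hp0 : 0 < p := by rw [hp]; positivity
  obtain ⟨ω, hω⟩ : ∃ ω, ω = (volume : Measure (EuclideanSpace ℝ (Fin n))).real
    (Metric.ball 0 1) := ⟨_, rfl⟩
  have hω0 : 0 < ω := by
    rw [hω]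
    exact ENNReal.toReal_pos (Metric.measure_ball_pos volume _ one_pos).ne' measure_ball_lt_top.ne
  set C : ℝ := 8 / ω * (2 * 2 ^ p / ω) ^ (2 * s / n) with hC
  have hC0 : 0 < C := by positivity
  refine ⟨C ^ ((1 : ℝ) / 2), by positivity, fun u hu hc => ?_⟩
  obtain ⟨hin, hout⟩ := gagliardo_integrable n hn s hs hs1 u hu hc
  have hui : Integrable (fun x => |u x| ^ p) := by
    apply Continuous.integrable_of_hasCompactSupport
    · exact hu.continuous.abs.rpow_const fun _ => Or.inr hp0.le
    · exact hc.comp_left (g := fun t : ℝ => |t| ^ p) (by simp [Real.zero_rpow hp0.ne'])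
  set E := ∫ x : EuclideanSpace ℝ (Fin n), ∫ y : EuclideanSpace ℝ (Fin n),
              |u x - u y| ^ 2 / ‖x - y‖ ^ ((n : ℝ) + 2 * s) with hE
  have hE0 : 0 ≤ E := integral_nonneg fun x => integral_nonneg fun y => by positivity
  obtain ⟨I, hI⟩ : ∃ I, I = ∫ x, |u x| ^ p := ⟨_, rfl⟩
  rw [← hI]
  have hI' : 0 ≤ I := by
    rw [hI]; exact integral_nonneg fun x => Real.rpow_nonneg (abs_nonneg _) _
  rcases eq_or_lt_of_le hI' with h0 | hI0
  · rw [← h0, Real.zero_rpow (by positivity)]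
    positivity
  have hIle : I ≤ C * I ^ (2 * s / n) * E := by
    conv_lhs => rw [hI]
    rw [hE, ← integral_const_mul]
    refine integral_mono hui (hout.const_mul _) fun x => ?_
    exact pointwise_bound n hn s hs hns p hp ω hω hω0 u hu.continuous hui I hI hI0 x (hin x)
  have hsplit : I = I ^ (2 / p) * I ^ (2 * s / n) := by
    rw [← Real.rpow_add hI0]
    have : 2 / p + 2 * s / n = 1 := by rw [hp]; field_simp; ring
    rw [this, Real.rpow_one]
  have hfin : I ^ (2 / p) ≤ C * E := by
    have hpos : 0 < I ^ (2 * s / n) := by positivity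
    refine le_of_mul_le_mul_right ?_ hpos
    rw [← hsplit]
    linarith
  have : I ^ (1 / p) = (I ^ (2 / p)) ^ ((1 : ℝ) / 2) := by
    rw [← Real.rpow_mul hI0.le]; congr 1; ring
  rw [this, ← Real.mul_rpow hC0.le hE0]
  exact Real.rpow_le_rpow (by positivity) hfin (by norm_num)
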